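/- Let (X,d) be a compact metric space, f_{1,∞} an NDS on X, ψ ∈ C(X,ℝ), and Z a nonempty compact subset of X. Then P^B_{f_{1,∞}}(Z,ψ) = P^W_{f_{1,∞}}(Z,ψ) = sup{ P_μ(X,ψ) : μ a Borel probability measure on X with μ(Z) = 1 }. -/

import Mathlib

/-!
Write `T` for the supremum of `P_μ(X, ψ)` over Borel probability measures `μ` with `μ Z = 1`.
Both `PWeps ε` and `PBeps ε` are shown to converge to `T` as `ε → 0`, by closing a circle of
inequalities in which `η` bounds the oscillation of `ψ` at the scale considered.

* `PWeps ε ≤ PBeps ε` (`PWeps_le_PBeps`): a cover is a weighted cover with all weights `1`.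
* `PBeps (2ε) ≤ PWeps ε + η + δ` for every `δ > 0` (`PBeps_le_PWeps`). Given a weighted cover by
  balls of order at least `N`, consider for each order `n` the points where the balls of order `n`
  have total weight at least `exp (-δ n)`. If `∑_{n ≥ N} exp (-δ n) < 1`, these sets cover `Z`.
  Choose in each of them a maximal family `E` of points whose balls `B_n(y, ε)` are disjoint; the
  balls `B_n(y, 2ε)` then cover the set. A centre of the weighted cover lies in at most one
  `B_n(y, ε)`, so each weight is used once, and the loss is the factor `exp (δ n)`.
* `PWeps ε ≤ T + η` (`PWeps_le_iSup_add`) is a Frostman lemma. If `α < PWeps ε`, the weighted sums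
  of order at least `N` are bounded below by some `κ > 0`. A Hahn–Banach extension for cones and
  the Riesz–Markov–Kakutani theorem (`exists_measure_le_of_fractional_cover`) turn this lower bound
  into a probability measure on `Z` with `μ (B_n(x, ε)) ≤ κ⁻¹ exp (-α n + S_n ψ(x, ε))`, whose local
  pressure is everywhere at least `α - η`.
* If `s < P_μ(X, ψ)`, then `s ≤ PWeps ε` for small `ε` (`le_PWeps_of_lt_Pmeas`), a mass distribution
  principle: on a set `A` of positive outer measure all `μ (B_n(x, 2ε))` with `n` large are at most
  `exp (S_n ψ(x) - s n)`, so a weighted cover costs at least `μ A`.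
-/

open Filter MeasureTheory Set ENNReal

noncomputable section

variable {X : Type} [MetricSpace X]

/-- The iterate `f_1^n = f_n ∘ ⋯ ∘ f_1` of the NDS `f`, where `f 0` is the first map `f_1`. -/
def nIter (f : ℕ → X → X) : ℕ → X → X
  | 0 => id
  | n + 1 => f n ∘ nIter f n

/-- The Bowen (dynamical) ball `B_n(x, ε)` for the Bowen metric
`d_n(x,y) = max_{0 ≤ j < n} d(f_1^j x, f_1^j y)`. -/
def bowenBall (f : ℕ → X → X) (n : ℕ) (x : X) (ε : ℝ) : Set X :=
  {y | ∀ j < n, dist (nIter f j x) (nIter f j y) < ε}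

/-- The Birkhoff sum `S_{1,n} ψ (x) = ∑_{j=0}^{n-1} ψ(f_1^j x)`. -/
def birkSum (f : ℕ → X → X) (ψ : X → ℝ) (n : ℕ) (x : X) : ℝ :=
  ∑ j ∈ Finset.range n, ψ (nIter f j x)

/-- `S_{1,n} ψ (x, ε) = sup_{y ∈ B_n(x,ε)} S_{1,n} ψ (y)`. -/
def birkSupBall (f : ℕ → X → X) (ψ : X → ℝ) (n : ℕ) (x : X) (ε : ℝ) : ℝ :=
  sSup (birkSum f ψ n '' bowenBall f n x ε)

/-- `M(n, α, ε, Z, ψ)`: infimum of `∑_i exp(-α n_i + S_{1,n_i}ψ(x_i, ε))` over all finite or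
countable covers `Z ⊆ ⋃_i B_{n_i}(x_i, ε)` with `n_i ≥ n`. -/
def Mpre (f : ℕ → X → X) (ψ : X → ℝ) (Z : Set X) (n : ℕ) (α ε : ℝ) : ℝ≥0∞ :=
  sInf { S : ℝ≥0∞ | ∃ (u : Set ℕ) (c : ℕ → X) (m : ℕ → ℕ),
    (∀ i ∈ u, n ≤ m i) ∧ (Z ⊆ ⋃ i ∈ u, bowenBall f (m i) (c i) ε) ∧
    S = ∑' i : u, ENNReal.ofReal (Real.exp (-α * (m i : ℝ) + birkSupBall f ψ (m i) (c i) ε)) }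

/-- `𝓜(n, α, ε, Z, ψ)`: as `Mpre` but with the Birkhoff sums evaluated at the centers. -/
def MpreC (f : ℕ → X → X) (ψ : X → ℝ) (Z : Set X) (n : ℕ) (α ε : ℝ) : ℝ≥0∞ :=
  sInf { S : ℝ≥0∞ | ∃ (u : Set ℕ) (c : ℕ → X) (m : ℕ → ℕ),
    (∀ i ∈ u, n ≤ m i) ∧ (Z ⊆ ⋃ i ∈ u, bowenBall f (m i) (c i) ε) ∧
    S = ∑' i : u, ENNReal.ofReal (Real.exp (-α * (m i : ℝ) + birkSum f ψ (m i) (c i))) }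

/-- `M(α, ε, Z, ψ) = lim_{n→∞} M(n, α, ε, Z, ψ)`; the quantity is nondecreasing in `n`,
so the limit is the supremum. -/
def Mlim (f : ℕ → X → X) (ψ : X → ℝ) (Z : Set X) (α ε : ℝ) : ℝ≥0∞ :=
  ⨆ n : ℕ, Mpre f ψ Z n α ε

/-- `𝓜(α, ε, Z, ψ) = lim_{n→∞} 𝓜(n, α, ε, Z, ψ)`. -/
def MlimC (f : ℕ → X → X) (ψ : X → ℝ) (Z : Set X) (α ε : ℝ) : ℝ≥0∞ :=
  ⨆ n : ℕ, MpreC f ψ Z n α ε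

/-- `P^B(ε, Z, ψ) = inf {α : M(α, ε, Z, ψ) = 0}`, as an extended real. -/
def PBeps (f : ℕ → X → X) (ψ : X → ℝ) (Z : Set X) (ε : ℝ) : EReal :=
  sInf (Real.toEReal '' {α : ℝ | Mlim f ψ Z α ε = 0})

/-- `𝒫^B(ε, Z, ψ) = inf {α : 𝓜(α, ε, Z, ψ) = 0}`. -/
def PBCeps (f : ℕ → X → X) (ψ : X → ℝ) (Z : Set X) (ε : ℝ) : EReal :=
  sInf (Real.toEReal '' {α : ℝ | MlimC f ψ Z α ε = 0})

/-- The Pesin–Pitskel topological pressure `P^B_{f_{1,∞}}(Z, ψ) = lim_{ε→0} P^B(ε, Z, ψ)`. -/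
def PB (f : ℕ → X → X) (ψ : X → ℝ) (Z : Set X) : EReal :=
  limUnder (nhdsWithin 0 (Ioi 0)) fun ε : ℝ => PBeps f ψ Z ε

/-- `W(n, α, ε, Z, ψ)`: the weighted analogue of `Mpre`. -/
def Wpre (f : ℕ → X → X) (ψ : X → ℝ) (Z : Set X) (n : ℕ) (α ε : ℝ) : ℝ≥0∞ :=
  sInf { S : ℝ≥0∞ | ∃ (u : Set ℕ) (cx : ℕ → X) (m : ℕ → ℕ) (c : ℕ → ℝ),
    (∀ i ∈ u, 0 < c i) ∧ (∀ i ∈ u, n ≤ m i) ∧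
    (∀ z ∈ Z, 1 ≤ ∑' i : u,
      (bowenBall f (m i) (cx i) ε).indicator (fun _ => ENNReal.ofReal (c i)) z) ∧
    S = ∑' i : u, ENNReal.ofReal (c i) *
      ENNReal.ofReal (Real.exp (-α * (m i : ℝ) + birkSupBall f ψ (m i) (cx i) ε)) }

/-- `W(α, ε, Z, ψ) = lim_{n→∞} W(n, α, ε, Z, ψ)`. -/
def Wlim (f : ℕ → X → X) (ψ : X → ℝ) (Z : Set X) (α ε : ℝ) : ℝ≥0∞ :=
  ⨆ n : ℕ, Wpre f ψ Z n α ε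

/-- `P^W(ε, Z, ψ)`: the critical value of `α` at which `W(α, ε, Z, ψ)` jumps from `∞` to `0`. -/
def PWeps (f : ℕ → X → X) (ψ : X → ℝ) (Z : Set X) (ε : ℝ) : EReal :=
  sInf (Real.toEReal '' {α : ℝ | Wlim f ψ Z α ε = 0})

/-- The weighted topological pressure `P^W_{f_{1,∞}}(Z, ψ) = lim_{ε→0} P^W(ε, Z, ψ)`. -/
def PW (f : ℕ → X → X) (ψ : X → ℝ) (Z : Set X) : EReal :=
  limUnder (nhdsWithin 0 (Ioi 0)) fun ε : ℝ => PWeps f ψ Z ε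

/-- Bowen topological entropy `h^B_top(f_{1,∞}, Z)`, i.e. pressure of the zero potential. -/
def hBtop (f : ℕ → X → X) (Z : Set X) : EReal := PB f (fun _ => 0) Z

/-- Weighted Bowen topological entropy `h^{WB}_top(f_{1,∞}, Z)`. -/
def hWBtop (f : ℕ → X → X) (Z : Set X) : EReal := PW f (fun _ => 0) Z

/-- `EReal → ℝ≥0∞`, sending `⊤` to `⊤` and everything negative to `0`. -/
def ERealToENNReal (x : EReal) : ℝ≥0∞ := if x = ⊤ then ⊤ else ENNReal.ofReal x.toReal

variable [MeasurableSpace X]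

/-- The measure-theoretic local pressure
`P_μ(x,ψ) = lim_{ε→0} liminf_{n→∞} (-log μ(B_n(x,ε)) + S_{1,n}ψ(x))/n`. -/
def Ploc (f : ℕ → X → X) (μ : Measure X) (ψ : X → ℝ) (x : X) : EReal :=
  limUnder (nhdsWithin 0 (Ioi 0)) fun ε : ℝ =>
    Filter.atTop.liminf fun n : ℕ =>
      (((n : ℝ)⁻¹ : ℝ) : EReal) *
        (-(ENNReal.log (μ (bowenBall f n x ε))) + ((birkSum f ψ n x : ℝ) : EReal))

/-- The integral of an extended-real-valued function: the difference of the lower integrals of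
its positive and negative parts. -/
def ERealIntegral (μ : Measure X) (g : X → EReal) : EReal :=
  ((∫⁻ x, ERealToENNReal (g x) ∂μ : ℝ≥0∞) : EReal)
    - ((∫⁻ x, ERealToENNReal (-(g x)) ∂μ : ℝ≥0∞) : EReal)

/-- The measure-theoretic pressure `P_μ(X, ψ) = ∫ P_μ(x, ψ) dμ(x)`. -/
def Pmeas (f : ℕ → X → X) (μ : Measure X) (ψ : X → ℝ) : EReal :=
  ERealIntegral μ (Ploc f μ ψ)

/-- The measure-theoretic local lower entropy `h̲_μ(f_{1,∞}, x)`. -/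
def hloc (f : ℕ → X → X) (μ : Measure X) (x : X) : EReal := Ploc f μ (fun _ => 0) x

/-- The measure-theoretic lower entropy `h̲_μ(f_{1,∞}) = ∫ h̲_μ(f_{1,∞}, x) dμ(x)`. -/
def hmeas (f : ℕ → X → X) (μ : Measure X) : EReal := Pmeas f μ (fun _ => 0)

set_option linter.unusedSectionVars false

/-! ### Measures dual to fractional covers -/

open CompactlySupported in
/-- Duality between fractional covers and measures: if every finite fractional cover of a compact
space by the open sets `U j` has total cost at least `1`, then some probability measure satisfies
`μ (U j) ≤ w j` for all `j`. The measure represents a functional `L` with `L 1 = 1` that is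
nonnegative on the cone `K` of functions dominating some `∑ c j (w j - χ_{U j})`, `c ≥ 0`. -/
theorem exists_measure_le_of_fractional_cover {Y J : Type*} [TopologicalSpace Y] [CompactSpace Y]
    [T2Space Y] [Nonempty Y] [MeasurableSpace Y] [BorelSpace Y]
    (U : J → Set Y) (hU : ∀ j, IsOpen (U j)) (w : J → ℝ) (hw : ∀ j, 0 ≤ w j)
    (H : ∀ c : J →₀ NNReal,
      (∀ x, 1 ≤ c.sum fun j a => (a : ℝ) * (U j).indicator (fun _ => (1 : ℝ)) x) →
        1 ≤ c.sum fun j a => (a : ℝ) * w j) :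
    ∃ μ : Measure Y, IsProbabilityMeasure μ ∧ ∀ j, μ (U j) ≤ ENNReal.ofReal (w j) := by
  classical
  let χ : J → Y → ℝ := fun j x => (U j).indicator (fun _ => (1 : ℝ)) x
  let one : C_c(Y, ℝ) := ⟨1, HasCompactSupport.of_compactSpace 1⟩
  have one_apply : ∀ x, one x = 1 := fun x => rfl
  have one_ne : one ≠ 0 := by
    intro h
    have := congrArg (fun g : C_c(Y, ℝ) => g (Classical.arbitrary Y)) h
    simp [one_apply] at this
  have sum_smul : ∀ (r : NNReal) (c : J →₀ NNReal) (b : J → ℝ),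
      ((r • c).sum fun j a => (a : ℝ) * b j) = r * c.sum fun j a => (a : ℝ) * b j := by
    intro r c b
    rw [Finsupp.sum_smul_index' (by simp), Finsupp.mul_sum]
    refine Finsupp.sum_congr fun j _ => ?_
    rw [smul_eq_mul, NNReal.coe_mul, mul_assoc]
  let K : PointedCone ℝ C_c(Y, ℝ) :=
    { carrier := {h | ∃ c : J →₀ NNReal, ∀ x, (c.sum fun j a => (a : ℝ) * (w j - χ j x)) ≤ h x}
      zero_mem' := ⟨0, fun x => by simp⟩
      add_mem' := by
        rintro g h ⟨c, hc⟩ ⟨d, hd⟩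
        refine ⟨c + d, fun x => ?_⟩
        rw [Finsupp.sum_add_index' (by simp) (by intros; push_cast; ring)]
        exact add_le_add (hc x) (hd x)
      smul_mem' := by
        rintro ⟨r, hr⟩ h ⟨c, hc⟩
        refine ⟨NNReal.mk r hr • c, fun x => ?_⟩
        rw [sum_smul]
        exact mul_le_mul_of_nonneg_left (hc x) hr }
  have split : ∀ (c : J →₀ NNReal) x, (c.sum fun j a => (a : ℝ) * (w j - χ j x))
      = (c.sum fun j a => (a : ℝ) * w j) - c.sum fun j a => (a : ℝ) * χ j x := by
    intro c x
    rw [← Finsupp.sum_sub]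
    exact Finsupp.sum_congr fun j _ => by ring
  -- A negative constant in `K` would, after rescaling, be a fractional cover of total weight `< 1`.
  have const_mem : ∀ t : ℝ, t • one ∈ K → 0 ≤ t := by
    rintro t ⟨c, hc⟩
    by_contra! ht
    set A : ℝ := c.sum fun j a => (a : ℝ) * w j with hA
    have hA0 : 0 ≤ A := Finset.sum_nonneg fun j _ => mul_nonneg (c j).2 (hw j)
    have hpos : 0 < A - t := by linarith
    let r : NNReal := NNReal.mk (A - t)⁻¹ (inv_pos.2 hpos).le
    have key : ∀ b : J → ℝ, ((r • c).sum fun j a => (a : ℝ) * b j)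
        = (A - t)⁻¹ * c.sum fun j a => (a : ℝ) * b j := sum_smul r c
    have h1 := H (r • c) fun x => by
      rw [key, ← div_eq_inv_mul, le_div_iff₀ hpos]
      have h := hc x
      have h2 : (t • one) x = t := by
        rw [CompactlySupportedContinuousMap.smul_apply, one_apply, smul_eq_mul, mul_one]
      rw [split, h2] at h
      have : A - c.sum (fun j a => (a : ℝ) * χ j x) ≤ t := h
      change _ ≤ c.sum (fun j a => (a : ℝ) * χ j x)
      linarith
    rw [key, ← div_eq_inv_mul, le_div_iff₀ hpos] at h1
    have : 1 * (A - t) ≤ A := h1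
    linarith
  obtain ⟨L, hL1, hLK⟩ := riesz_extension K (LinearPMap.mkSpanSingleton one (1 : ℝ) one_ne)
    (by
      rintro ⟨x, hx⟩ hxK
      obtain ⟨t, rfl⟩ := Submodule.mem_span_singleton.1 hx
      rw [LinearPMap.mkSpanSingleton'_apply]
      simpa using const_mem t hxK)
    (by
      intro y
      obtain ⟨M, hM⟩ := (isCompact_range y.continuous).bddBelow
      refine ⟨⟨(-M) • one, Submodule.mem_span_singleton.2 ⟨_, rfl⟩⟩, 0, fun x => ?_⟩
      have : M ≤ y x := hM (mem_range_self x)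
      simp only [Finsupp.sum_zero_index, CompactlySupportedContinuousMap.add_apply,
        CompactlySupportedContinuousMap.smul_apply, one_apply]
      simp
      linarith)
  have hLone : L one = 1 := by
    exact (hL1 ⟨one, Submodule.mem_span_singleton_self one⟩).trans
      (LinearPMap.mkSpanSingleton_apply ℝ ℝ one_ne 1)
  let Λ : C_c(Y, ℝ) →ₚ[ℝ] ℝ := PositiveLinearMap.mk₀ L fun h hh => hLK h ⟨0, fun x => by
    simpa using hh x⟩
  have hΛ : ∀ g, Λ g = L g := fun g => rfl
  refine ⟨RealRMK.rieszMeasure Λ, ⟨?_⟩, fun j => ?_⟩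
  · apply le_antisymm
    · refine (RealRMK.rieszMeasure_le_of_eq_one Λ (f := one) (fun x => by simp [one_apply])
        isCompact_univ (fun x _ => one_apply x)).trans ?_
      simp [hΛ, hLone]
    · have := RealRMK.le_rieszMeasure_tsupport_subset Λ (f := one)
        (fun x => by simp [one_apply]) (subset_univ _)
      simpa [hΛ, hLone] using this
  -- Urysohn functions `g ≤ χ_{U j}` satisfy `w j - g ∈ K`, hence `L g ≤ w j`.
  · rw [(hU j).measure_eq_iSup_isCompact]
    refine iSup₂_le fun C hC => iSup_le fun hCc => ?_
    obtain ⟨g, hg1, hg0, -, hg⟩ := exists_continuous_one_zero_of_isCompact hCc (hU j).isClosed_compl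
      (disjoint_compl_right_iff_subset.2 hC)
    let g' : C_c(Y, ℝ) := ⟨g, HasCompactSupport.of_compactSpace _⟩
    refine (RealRMK.rieszMeasure_le_of_eq_one Λ (f := g') (fun x => (hg x).1) hCc
      (fun x hx => hg1 hx)).trans (ENNReal.ofReal_le_ofReal ?_)
    have : 0 ≤ L (w j • one - g') := hLK _ ⟨Finsupp.single j 1, fun x => by
      rw [Finsupp.sum_single_index (by simp)]
      have h3 : (w j • one - g') x = w j - g x := by
        simp [one_apply, g']
      rw [h3]
      have : g x ≤ χ j x := by
        by_cases hx : x ∈ U j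
        · simpa [χ, hx] using (hg x).2
        · simpa [χ, hx] using (hg0 hx).le
      simp only [NNReal.coe_one, one_mul]
      linarith⟩
    rw [map_sub, map_smul, hLone] at this
    simp only [smul_eq_mul, mul_one] at this
    rw [hΛ]
    linarith

/-! ### Bowen balls and Birkhoff sums -/

section Bowen

variable {f : ℕ → X → X} {ψ : X → ℝ} {n : ℕ} {x y z : X} {ε : ℝ}

theorem continuous_nIter (hf : ∀ n, Continuous (f n)) : ∀ n, Continuous (nIter f n)
  | 0 => continuous_id
  | n + 1 => (hf n).comp (continuous_nIter hf n)

theorem isOpen_bowenBall (hf : ∀ n, Continuous (f n)) (n : ℕ) (x : X) (ε : ℝ) :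
    IsOpen (bowenBall f n x ε) := by
  have : bowenBall f n x ε
      = ⋂ j ∈ Finset.range n, {y | dist (nIter f j x) (nIter f j y) < ε} := by
    ext y
    simp [bowenBall]
  rw [this]
  exact isOpen_biInter_finset fun j _ =>
    isOpen_lt (continuous_const.dist (continuous_nIter hf j)) continuous_const

theorem mem_bowenBall_self (hε : 0 < ε) : x ∈ bowenBall f n x ε := fun j _ => by simpa using hε

theorem mem_bowenBall_comm : y ∈ bowenBall f n x ε ↔ x ∈ bowenBall f n y ε := by
  simp [bowenBall, dist_comm]

theorem bowenBall_triangle {δ : ℝ} (h₁ : y ∈ bowenBall f n x ε) (h₂ : z ∈ bowenBall f n y δ) :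
    z ∈ bowenBall f n x (ε + δ) := fun j hj =>
  (dist_triangle _ (nIter f j y) _).trans_lt (add_lt_add (h₁ j hj) (h₂ j hj))

theorem bowenBall_mono {δ : ℝ} (h : ε ≤ δ) : bowenBall f n x ε ⊆ bowenBall f n x δ :=
  fun _ hy j hj => (hy j hj).trans_le h

theorem bddAbove_birkSum [CompactSpace X] (hψ : Continuous ψ) (n : ℕ) (A : Set X) :
    BddAbove (birkSum f ψ n '' A) := by
  obtain ⟨C, hC⟩ := (isCompact_range hψ).bddAbove
  refine ⟨∑ _j ∈ Finset.range n, C, ?_⟩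
  rintro _ ⟨y, -, rfl⟩
  exact Finset.sum_le_sum fun j _ => hC (mem_range_self _)

theorem birkSum_le_birkSupBall [CompactSpace X] (hψ : Continuous ψ)
    (h : y ∈ bowenBall f n x ε) : birkSum f ψ n y ≤ birkSupBall f ψ n x ε :=
  le_csSup (bddAbove_birkSum hψ n _) (mem_image_of_mem _ h)

theorem birkSupBall_le {η : ℝ} (hε : 0 < ε) (hη : ∀ a b, dist a b < ε → ψ b ≤ ψ a + η) :
    birkSupBall f ψ n x ε ≤ birkSum f ψ n x + n * η := by
  refine csSup_le ⟨_, mem_image_of_mem _ (mem_bowenBall_self hε)⟩ ?_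
  rintro _ ⟨y, hy, rfl⟩
  calc birkSum f ψ n y ≤ ∑ j ∈ Finset.range n, (ψ (nIter f j x) + η) :=
        Finset.sum_le_sum fun j hj => hη _ _ (hy j (Finset.mem_range.1 hj))
    _ = birkSum f ψ n x + n * η := by simp [birkSum, Finset.sum_add_distrib]

theorem exists_modulus [CompactSpace X] (hψ : Continuous ψ) {η : ℝ} (hη : 0 < η) :
    ∃ ε₀ > 0, ∀ a b, dist a b < ε₀ → ψ b ≤ ψ a + η := by
  obtain ⟨ε₀, h₀, h⟩ := Metric.uniformContinuous_iff.1
    (CompactSpace.uniformContinuous_of_continuous hψ) η hη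
  refine ⟨ε₀, h₀, fun a b hab => ?_⟩
  have := (abs_lt.1 (h hab)).1
  linarith

end Bowen

/-! ### Covers and weighted covers -/

section Families

variable {f : ℕ → X → X} {ψ : X → ℝ} {Z : Set X} {n : ℕ} {α ε : ℝ}

/-- Any countable type may index the covers in `Mpre`, in place of a set of natural numbers. -/
theorem Mpre_le_tsum [Nonempty X] {ι : Type*} [Countable ι] (c : ι → X) (m : ι → ℕ)
    (hm : ∀ i, n ≤ m i) (hZ : Z ⊆ ⋃ i, bowenBall f (m i) (c i) ε) :
    Mpre f ψ Z n α ε ≤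
      ∑' i, ENNReal.ofReal (Real.exp (-α * (m i : ℝ) + birkSupBall f ψ (m i) (c i) ε)) := by
  obtain ⟨e, he⟩ := exists_injective_nat ι
  let c' := Function.extend e c fun _ => Classical.arbitrary X
  let m' := Function.extend e m fun _ => 0
  have hc' : ∀ i, c' (e i) = c i := he.extend_apply c _
  have hm' : ∀ i, m' (e i) = m i := he.extend_apply m _
  refine sInf_le ⟨range e, c', m', ?_, ?_, ?_⟩
  · rintro _ ⟨i, rfl⟩
    simpa [hm'] using hm i
  · simpa [hm', hc'] using hZ
  · rw [tsum_range (g := e) (fun k => ENNReal.ofReal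
      (Real.exp (-α * (m' k : ℝ) + birkSupBall f ψ (m' k) (c' k) ε))) he]
    simp [hm', hc']

/-- Any countable type may index the weighted covers in `Wpre`, in place of a set of natural
numbers. -/
theorem Wpre_le_tsum [Nonempty X] {ι : Type*} [Countable ι] (x : ι → X) (m : ι → ℕ) (c : ι → ℝ)
    (hc : ∀ i, 0 < c i) (hm : ∀ i, n ≤ m i)
    (hZ : ∀ z ∈ Z, 1 ≤ ∑' i,
      (bowenBall f (m i) (x i) ε).indicator (fun _ => ENNReal.ofReal (c i)) z) :
    Wpre f ψ Z n α ε ≤ ∑' i, ENNReal.ofReal (c i) *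
      ENNReal.ofReal (Real.exp (-α * (m i : ℝ) + birkSupBall f ψ (m i) (x i) ε)) := by
  obtain ⟨e, he⟩ := exists_injective_nat ι
  let x' := Function.extend e x fun _ => Classical.arbitrary X
  let m' := Function.extend e m fun _ => 0
  let c' := Function.extend e c fun _ => 0
  have hx' : ∀ i, x' (e i) = x i := he.extend_apply x _
  have hm' : ∀ i, m' (e i) = m i := he.extend_apply m _
  have hc' : ∀ i, c' (e i) = c i := he.extend_apply c _
  refine sInf_le ⟨range e, x', m', c', ?_, ?_, ?_, ?_⟩
  · rintro _ ⟨i, rfl⟩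
    simpa [hc'] using hc i
  · rintro _ ⟨i, rfl⟩
    simpa [hm'] using hm i
  · intro z hz
    rw [tsum_range (g := e) (fun k =>
      (bowenBall f (m' k) (x' k) ε).indicator (fun _ => ENNReal.ofReal (c' k)) z) he]
    simpa [hm', hx', hc'] using hZ z hz
  · rw [tsum_range (g := e) (fun k => ENNReal.ofReal (c' k) * ENNReal.ofReal
      (Real.exp (-α * (m' k : ℝ) + birkSupBall f ψ (m' k) (x' k) ε))) he]
    simp [hm', hx', hc']

theorem Wpre_le_Mpre : Wpre f ψ Z n α ε ≤ Mpre f ψ Z n α ε := by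
  refine le_sInf ?_
  rintro S ⟨u, c, m, hm, hZ, rfl⟩
  refine sInf_le ⟨u, c, m, fun _ => 1, by simp, hm, fun z hz => ?_, by simp⟩
  obtain ⟨i, hi, hzi⟩ := mem_iUnion₂.1 (hZ hz)
  refine le_trans ?_ (ENNReal.le_tsum ⟨i, hi⟩)
  simp [hzi]

theorem PWeps_le_PBeps : PWeps f ψ Z ε ≤ PBeps f ψ Z ε := by
  refine sInf_le_sInf (image_mono fun α (hα : Mlim f ψ Z α ε = 0) => ?_)
  exact le_antisymm ((iSup_mono fun n => Wpre_le_Mpre).trans_eq hα) zero_le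

theorem Mpre_mono {n' : ℕ} (h : n ≤ n') : Mpre f ψ Z n α ε ≤ Mpre f ψ Z n' α ε :=
  sInf_le_sInf fun _ ⟨u, c, m, hm, hZ, hS⟩ => ⟨u, c, m, fun i hi => h.trans (hm i hi), hZ, hS⟩

end Families

/-! ### Bounding covers by weighted covers -/

section Comparison

variable {f : ℕ → X → X} {ψ : X → ℝ} {Z : Set X} {α ε η δ : ℝ}

theorem tsum_ite_le_of_unique {ι : Type*} {P : ι → Prop} [DecidablePred P] (F : ℝ≥0∞)
    (h : ∀ p q, P p → P q → p = q) : (∑' p, if P p then F else 0) ≤ F := by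
  by_cases hp : ∃ p, P p
  · obtain ⟨p, hp⟩ := hp
    rw [tsum_eq_single p fun q hq => if_neg fun hPq => hq (h q p hPq hp)]
    simp [hp]
  · push Not at hp
    simp [hp]

/-- A weighted cover of order at least `N` and radius `ε` yields a cover of order at least `N` and
radius `2 * ε` whose cost, at the exponent `α + η + δ`, is no larger: `η` pays for moving from the
centre of a ball to the supremum over it, `δ` for the thresholds `exp (-δ n)`. -/
theorem Mpre_le_Wpre [CompactSpace X] [Nonempty X] (hf : ∀ n, Continuous (f n))
    (hψ : Continuous ψ) (hε : 0 < ε) (hη : ∀ a b, dist a b < 2 * ε → ψ b ≤ ψ a + η) (N : ℕ)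
    (hN : ∑' k : ℕ, ENNReal.ofReal (Real.exp (-δ * (k + N : ℕ))) < 1) :
    Mpre f ψ Z N (α + η + δ) (2 * ε) ≤ Wpre f ψ Z N α ε := by
  classical
  refine le_sInf ?_
  rintro S ⟨u, x, m, c, hc, hm, hZ, rfl⟩
  let t : ℕ → ℝ≥0∞ := fun k => ENNReal.ofReal (Real.exp (-δ * (k + N : ℕ)))
  let a : u → X → ℝ≥0∞ := fun i =>
    (bowenBall f (m i) (x i) ε).indicator fun _ => ENNReal.ofReal (c i)
  let g : ℕ → X → ℝ≥0∞ := fun k z => ∑' i : u, if m i = k + N then a i z else 0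
  let b : u → ℝ≥0∞ := fun i =>
    ENNReal.ofReal (Real.exp (-α * (m i : ℝ) + birkSupBall f ψ (m i) (x i) ε))
  have hE : ∀ k, ∃ E ⊆ {z | t k ≤ g k z}, E.PairwiseDisjoint (fun y => bowenBall f (k + N) y ε) ∧
      ∀ y ∈ {z | t k ≤ g k z}, ∃ y' ∈ E,
        (bowenBall f (k + N) y ε ∩ bowenBall f (k + N) y' ε).Nonempty := by
    intro k
    obtain ⟨E, h1, h2, h3⟩ := Vitali.exists_disjoint_subfamily_covering_enlargement
      (fun y => bowenBall f (k + N) y ε) {z | t k ≤ g k z} (fun _ => 1) 2 (by norm_num)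
      (fun _ _ => zero_le_one) 1 (fun _ _ => le_rfl) (fun y _ => ⟨y, mem_bowenBall_self hε⟩)
    exact ⟨E, h1, h2, fun y hy => (h3 y hy).imp fun y' h => ⟨h.1, h.2.1⟩⟩
  choose E hEt hEd hEc using hE
  have hcount : ∀ k, Countable (E k) := fun k =>
    ((hEd k).countable_of_isOpen (fun y _ => isOpen_bowenBall hf _ y ε)
      fun y _ => ⟨y, mem_bowenBall_self hε⟩).to_subtype
  have hcover : Z ⊆ ⋃ p : Σ k, E k, bowenBall f (p.1 + N) p.2 (2 * ε) := by
    intro z hz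
    -- Otherwise the total weight at `z` is at most the geometric tail `∑ t k < 1`.
    obtain ⟨k, hk⟩ : ∃ k, t k ≤ g k z := by
      by_contra! hlt
      refine absurd (hZ z hz) (not_le.2 ?_)
      calc ∑' i : u, a i z = ∑' (i : u) (k : ℕ), if m i = k + N then a i z else 0 := by
            refine tsum_congr fun i => ?_
            obtain ⟨k, hk⟩ := Nat.exists_eq_add_of_le' (hm i i.2)
            rw [tsum_eq_single k fun k' hk' => if_neg fun h => hk' (by omega)]
            simp [hk]
        _ = ∑' k, g k z := ENNReal.tsum_comm
        _ ≤ ∑' k, t k := ENNReal.tsum_le_tsum fun k => (hlt k).le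
        _ < 1 := hN
    obtain ⟨y, hy, w, hw1, hw2⟩ := hEc k z hk
    refine mem_iUnion.2 ⟨⟨k, y, hy⟩, ?_⟩
    rw [two_mul]
    exact bowenBall_triangle hw2 (mem_bowenBall_comm.1 hw1)
  refine (Mpre_le_tsum (fun p : Σ k, E k => (p.2 : X)) (fun p => p.1 + N)
    (fun p => Nat.le_add_left _ _) hcover).trans ?_
  calc _ ≤ ∑' (p : Σ k, E k) (i : u),
        if m i = p.1 + N ∧ (p.2 : X) ∈ bowenBall f (m i) (x i) ε
          then ENNReal.ofReal (c i) * b i else 0 := ENNReal.tsum_le_tsum ?_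
    _ = ∑' (i : u) (p : Σ k, E k),
        if m i = p.1 + N ∧ (p.2 : X) ∈ bowenBall f (m i) (x i) ε
          then ENNReal.ofReal (c i) * b i else 0 := ENNReal.tsum_comm
    _ ≤ ∑' i : u, ENNReal.ofReal (c i) * b i := ENNReal.tsum_le_tsum fun i =>
        tsum_ite_le_of_unique _ ?_
  -- The threshold inequality `t k ≤ g k y` distributes the cost of `y` over the balls containing it.
  · rintro ⟨k, y, hy⟩
    dsimp only
    set n := k + N with hn
    have h1 : ENNReal.ofReal (Real.exp (-(α + η + δ) * (n : ℝ) + birkSupBall f ψ n y (2 * ε)))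
        ≤ ENNReal.ofReal (Real.exp (-α * (n : ℝ) + birkSum f ψ n y)) * t k := by
      rw [← ENNReal.ofReal_mul (Real.exp_pos _).le, ← Real.exp_add]
      refine ENNReal.ofReal_le_ofReal (Real.exp_le_exp.2 ?_)
      have := birkSupBall_le (f := f) (n := n) (x := y) (by linarith) hη
      linarith
    refine h1.trans ((mul_le_mul_right (hEt k hy) _).trans ?_)
    rw [← ENNReal.tsum_mul_left]
    refine ENNReal.tsum_le_tsum fun i => ?_
    by_cases hi : m i = n ∧ y ∈ bowenBall f (m i) (x i) ε
    · rw [if_pos hi, if_pos hi.1]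
      simp only [a, indicator_of_mem hi.2]
      rw [mul_comm]
      refine mul_le_mul_right (ENNReal.ofReal_le_ofReal (Real.exp_le_exp.2 ?_)) _
      rw [hi.1]
      have := birkSum_le_birkSupBall hψ (hi.1 ▸ hi.2)
      linarith
    · rw [if_neg hi]
      by_cases hmi : m i = n
      · rw [if_pos hmi]
        simp only [a, indicator_of_notMem fun h => hi ⟨hmi, h⟩, mul_zero, le_refl]
      · rw [if_neg hmi, mul_zero]
  -- The balls about the points of `E k` are disjoint, so the centre `x i` lies in at most one.
  · rintro ⟨k, y, hy⟩ ⟨k', y', hy'⟩ ⟨h1, h2⟩ ⟨h1', h2'⟩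
    obtain rfl : k = k' := by dsimp only at h1 h1'; omega
    dsimp only at h1 h2 h2'
    rw [h1] at h2 h2'
    have := (hEd k).elim_set hy hy' (x i) (mem_bowenBall_comm.1 h2) (mem_bowenBall_comm.1 h2')
    subst this
    rfl

theorem exists_tail_lt_one (hδ : 0 < δ) (n : ℕ) : ∃ N ≥ n,
    ∑' k : ℕ, ENNReal.ofReal (Real.exp (-δ * (k + N : ℕ))) < 1 := by
  have hr : ENNReal.ofReal (Real.exp (-δ)) < 1 := by simpa using hδ
  have hpow : ∀ k : ℕ, ENNReal.ofReal (Real.exp (-δ * k)) = ENNReal.ofReal (Real.exp (-δ)) ^ k := by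
    intro k
    rw [← ENNReal.ofReal_pow (Real.exp_pos _).le, ← Real.exp_nat_mul, mul_comm]
  have hfin : ∑' k : ℕ, ENNReal.ofReal (Real.exp (-δ * k)) ≠ ⊤ := by
    simp_rw [hpow]
    rw [ENNReal.tsum_geometric]
    exact ENNReal.inv_ne_top.2 (tsub_pos_of_lt hr).ne'
  obtain ⟨N, hN1, hN2⟩ := (((ENNReal.tendsto_sum_nat_add _ hfin).eventually_lt_const
    one_pos).and (eventually_ge_atTop n)).exists
  exact ⟨N, hN2, hN1⟩

theorem PBeps_le_PWeps [CompactSpace X] [Nonempty X] (hf : ∀ n, Continuous (f n))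
    (hψ : Continuous ψ) (hε : 0 < ε) (hδ : 0 < δ)
    (hη : ∀ a b, dist a b < 2 * ε → ψ b ≤ ψ a + η) :
    PBeps f ψ Z (2 * ε) ≤ PWeps f ψ Z ε + ((η + δ : ℝ) : EReal) := by
  rw [← EReal.sub_le_iff_le_add (Or.inl (EReal.coe_ne_bot _)) (Or.inl (EReal.coe_ne_top _))]
  refine le_sInf ?_
  rintro _ ⟨α, hα, rfl⟩
  rw [EReal.sub_le_iff_le_add (Or.inl (EReal.coe_ne_bot _)) (Or.inl (EReal.coe_ne_top _))]
  refine sInf_le ⟨α + η + δ, ?_, by push_cast; rw [add_assoc]⟩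
  refine le_antisymm (iSup_le fun n => ?_) zero_le
  obtain ⟨N, hnN, hN⟩ := exists_tail_lt_one hδ n
  refine (Mpre_mono hnN).trans ((Mpre_le_Wpre hf hψ hε hη N hN).trans ?_)
  exact (le_iSup (fun n => Wpre f ψ Z n α ε) N).trans_eq hα

end Comparison

/-! ### Local pressure of measures -/

section Measures

variable {f : ℕ → X → X} {ψ : X → ℝ} {Z : Set X} {α ε η : ℝ}

/-- Frostman lemma: an exponent below the weighted pressure at scale `ε` is realised by a probability
measure on `Z` with exponentially small Bowen balls. -/
theorem exists_measure_of_lt_PWeps [CompactSpace X] [Nonempty X] [BorelSpace X]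
    (hf : ∀ n, Continuous (f n)) (hZ : IsClosed Z) (hα : (α : EReal) < PWeps f ψ Z ε) :
    ∃ μ : Measure X, IsProbabilityMeasure μ ∧ μ Z = 1 ∧ ∃ κ > 0, ∃ N : ℕ, ∀ n ≥ N, ∀ x,
      μ (bowenBall f n x ε) ≤
        ENNReal.ofReal (κ⁻¹ * Real.exp (-α * n + birkSupBall f ψ n x ε)) := by
  classical
  obtain ⟨N, hN⟩ : ∃ N, Wpre f ψ Z N α ε ≠ 0 := by
    by_contra! h
    exact absurd hα (not_lt.2 (sInf_le ⟨α, by simp [Wlim, h], rfl⟩))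
  -- `Wpre` may be infinite; truncating at `1` keeps the lower bound `κ` real and positive.
  set κ := (min 1 (Wpre f ψ Z N α ε)).toReal with hκ
  have hmin : min 1 (Wpre f ψ Z N α ε) ≠ ⊤ := (min_le_left _ _).trans_lt one_lt_top |>.ne
  have hκ0 : 0 < κ := ENNReal.toReal_pos (by simp [hN]) hmin
  have hκW : ENNReal.ofReal κ ≤ Wpre f ψ Z N α ε := by
    rw [hκ, ENNReal.ofReal_toReal hmin]
    exact min_le_right _ _
  let e : ℕ × X → ℝ := fun p =>
    Real.exp (-α * (p.1 + N : ℕ) + birkSupBall f ψ (p.1 + N) p.2 ε)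
  -- The index `none` stands for the open set `Zᶜ` at cost `0`, which forces `μ Zᶜ = 0`.
  let U : Option (ℕ × X) → Set X := fun o => o.elim Zᶜ fun p => bowenBall f (p.1 + N) p.2 ε
  let w : Option (ℕ × X) → ℝ := fun o => o.elim 0 fun p => κ⁻¹ * e p
  obtain ⟨μ, hμ, hμU⟩ := exists_measure_le_of_fractional_cover U
    (by rintro (_ | p); exacts [hZ.isOpen_compl, isOpen_bowenBall hf _ _ _]) w
    (by rintro (_ | p); exacts [le_rfl, (mul_pos (inv_pos.2 hκ0) (Real.exp_pos _)).le])
    (by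
      intro c hc
      have hsum : κ ≤ c.some.sum fun p a => (a : ℝ) * e p := by
        rw [← ENNReal.ofReal_le_ofReal_iff (q := c.some.sum fun p a => (a : ℝ) * e p)
          (Finset.sum_nonneg fun p _ => mul_nonneg (c.some p).2 (Real.exp_pos _).le)]
        refine hκW.trans ((Wpre_le_tsum (ι := c.some.support) (fun p => p.1.2)
          (fun p => p.1.1 + N) (fun p => (c.some p : ℝ))
          (fun p => NNReal.coe_pos.2 (pos_iff_ne_zero.2 (Finsupp.mem_support_iff.1 p.2)))
          (fun p => Nat.le_add_left _ _) fun z hz => ?_).trans_eq ?_)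
        · have h := hc z
          rw [Finsupp.sum_option_index _ _ (by simp) (by intros; push_cast; ring)] at h
          have h0 : (U none).indicator (fun _ => (1 : ℝ)) z = 0 :=
            indicator_of_notMem (not_not_intro hz : z ∉ Zᶜ) _
          rw [h0, mul_zero, zero_add] at h
          rw [tsum_fintype, Finset.sum_coe_sort c.some.support (fun p =>
            (bowenBall f (p.1 + N) p.2 ε).indicator
              (fun _ => ENNReal.ofReal (c.some p : ℝ)) z)]
          refine (ENNReal.one_le_ofReal.2 h).trans_eq ?_
          rw [Finsupp.sum, ENNReal.ofReal_sum_of_nonneg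
            (f := fun p => (c.some p : ℝ) * (U (some p)).indicator (fun _ => (1 : ℝ)) z)
            fun p _ => mul_nonneg (c.some p).2 (indicator_nonneg (fun _ _ => zero_le_one) _)]
          refine Finset.sum_congr rfl fun p _ => ?_
          by_cases hp : z ∈ bowenBall f (p.1 + N) p.2 ε
          · simp [U, hp]
          · simp [U, hp]
        · rw [tsum_fintype, Finset.sum_coe_sort c.some.support (fun p =>
            ENNReal.ofReal (c.some p : ℝ) * ENNReal.ofReal (e p)), Finsupp.sum,
            ENNReal.ofReal_sum_of_nonneg (f := fun p => (c.some p : ℝ) * e p) fun p _ =>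
              mul_nonneg (c.some p).2 (Real.exp_pos _).le]
          exact Finset.sum_congr rfl fun p _ => (ENNReal.ofReal_mul (c.some p).2).symm
      rw [Finsupp.sum_option_index _ _ (by simp) (by intros; push_cast; ring)]
      have h1 : (c.some.sum fun p a => (a : ℝ) * w (some p))
          = κ⁻¹ * c.some.sum fun p a => (a : ℝ) * e p := by
        rw [Finsupp.mul_sum]
        exact Finsupp.sum_congr fun p _ => by simp only [w, Option.elim]; ring
      rw [h1]
      simp only [w, Option.elim, mul_zero, zero_add]
      rw [← div_eq_inv_mul, one_le_div hκ0]
      exact hsum)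
  refine ⟨μ, hμ, ?_, κ, hκ0, N, fun n hn x => ?_⟩
  · have h0 : μ Zᶜ = 0 := by simpa [U, w] using hμU none
    exact (prob_compl_eq_zero_iff hZ.measurableSet).1 h0
  · obtain ⟨k, rfl⟩ := Nat.exists_eq_add_of_le' hn
    exact hμU (some (k, x))

/-- The normalised logarithmic term in the local pressure is at least `r` exactly when the ball
satisfies the corresponding exponential bound; a null ball makes the left side `⊤`. -/
theorem le_term_iff {n : ℕ} (hn : 0 < n) {m : ℝ≥0∞} (hm : m ≠ ⊤) (r s : ℝ) :
    (r : EReal) ≤ (((n : ℝ)⁻¹ : ℝ) : EReal) * (-(ENNReal.log m) + (s : EReal)) ↔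
      m ≤ ENNReal.ofReal (Real.exp (s - r * n)) := by
  have hn' : (0 : ℝ) < n := Nat.cast_pos.2 hn
  by_cases h0 : m = 0
  · subst h0
    simp only [ENNReal.log_zero, EReal.neg_bot, EReal.top_add_coe, zero_le, iff_true]
    rw [EReal.coe_mul_top_of_pos (inv_pos.2 hn')]
    exact le_top
  · have hpos : 0 < m.toReal := ENNReal.toReal_pos h0 hm
    rw [ENNReal.log_pos_real h0 hm, ← EReal.coe_neg, ← EReal.coe_add, ← EReal.coe_mul,
      EReal.coe_le_coe_iff, ← ENNReal.toReal_le_toReal hm ENNReal.ofReal_ne_top,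
      ENNReal.toReal_ofReal (Real.exp_pos _).le, ← Real.log_le_iff_le_exp hpos,
      ← div_eq_inv_mul, le_div_iff₀ hn']
    constructor <;> intro h <;> linarith

/-- The approximation at scale `ε` of the local pressure: the lower limit over `n` whose limit as
`ε → 0` defines `Ploc`. -/
def PlocEps (f : ℕ → X → X) (μ : Measure X) (ψ : X → ℝ) (x : X) (ε : ℝ) : EReal :=
  Filter.atTop.liminf fun n : ℕ =>
    (((n : ℝ)⁻¹ : ℝ) : EReal) *
      (-(ENNReal.log (μ (bowenBall f n x ε))) + ((birkSum f ψ n x : ℝ) : EReal))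

/-- `PlocEps` is antitone in `ε`, so the limit in `Ploc` exists and is a supremum. -/
theorem Ploc_eq_sSup (μ : Measure X) (x : X) :
    Ploc f μ ψ x = sSup (PlocEps f μ ψ x '' Ioi 0) := by
  have hanti : Antitone (PlocEps f μ ψ x) := by
    intro ε δ h
    refine liminf_le_liminf (Eventually.of_forall fun n => ?_)
    refine mul_le_mul_of_nonneg_left ?_ (EReal.coe_nonneg.2 (by positivity))
    gcongr
    exact EReal.neg_le_neg_iff.2 (ENNReal.log_monotone (measure_mono (bowenBall_mono h)))
  exact (hanti.tendsto_nhdsGT 0).limUnder_eq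

theorem coe_toENNReal_sub_toENNReal_neg (r : ℝ) :
    ((r : EReal).toENNReal : EReal) - ((-(r : EReal)).toENNReal : EReal) = r := by
  rw [← EReal.coe_neg, EReal.toENNReal_of_ne_top (EReal.coe_ne_top _),
    EReal.toENNReal_of_ne_top (EReal.coe_ne_top _), EReal.coe_ennreal_ofReal,
    EReal.coe_ennreal_ofReal, EReal.toReal_coe, EReal.toReal_coe, ← EReal.coe_sub]
  congr 1
  rcases le_total r 0 with h | h
  · rw [max_eq_right h, max_eq_left (by linarith)]; ring
  · rw [max_eq_left h, max_eq_right (by linarith)]; ring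

theorem le_Pmeas_of_forall {μ : Measure X} [IsProbabilityMeasure μ] {r : ℝ}
    (h : ∀ x, (r : EReal) ≤ Ploc f μ ψ x) : (r : EReal) ≤ Pmeas f μ ψ := by
  have h1 : (r : EReal).toENNReal ≤ ∫⁻ x, (Ploc f μ ψ x).toENNReal ∂μ := by
    simpa using lintegral_mono (μ := μ) fun x => EReal.toENNReal_le_toENNReal (h x)
  have h2 : ∫⁻ x, (-(Ploc f μ ψ x)).toENNReal ∂μ ≤ (-(r : EReal)).toENNReal := by
    simpa using lintegral_mono (μ := μ) fun x =>
      EReal.toENNReal_le_toENNReal (EReal.neg_le_neg_iff.2 (h x))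
  calc (r : EReal) = ((r : EReal).toENNReal : EReal) - ((-(r : EReal)).toENNReal : EReal) :=
        (coe_toENNReal_sub_toENNReal_neg _).symm
    _ ≤ _ := EReal.sub_le_sub (EReal.coe_ennreal_le_coe_ennreal_iff.2 h1)
        (EReal.coe_ennreal_le_coe_ennreal_iff.2 h2)

theorem Pmeas_le_of_ae {μ : Measure X} [IsProbabilityMeasure μ] {r : ℝ}
    (h : ∀ᵐ x ∂μ, Ploc f μ ψ x ≤ r) : Pmeas f μ ψ ≤ r := by
  have h1 : ∫⁻ x, (Ploc f μ ψ x).toENNReal ∂μ ≤ (r : EReal).toENNReal := by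
    simpa using lintegral_mono_ae (μ := μ) (h.mono fun x hx => EReal.toENNReal_le_toENNReal hx)
  have h2 : (-(r : EReal)).toENNReal ≤ ∫⁻ x, (-(Ploc f μ ψ x)).toENNReal ∂μ := by
    simpa using lintegral_mono_ae (μ := μ) (h.mono fun x hx =>
      EReal.toENNReal_le_toENNReal (EReal.neg_le_neg_iff.2 hx))
  calc _ ≤ ((r : EReal).toENNReal : EReal) - ((-(r : EReal)).toENNReal : EReal) :=
        EReal.sub_le_sub (EReal.coe_ennreal_le_coe_ennreal_iff.2 h1)
          (EReal.coe_ennreal_le_coe_ennreal_iff.2 h2)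
    _ = _ := coe_toENNReal_sub_toENNReal_neg _

/-- The supremum over measures is, up to the oscillation `η` of `ψ` at scale `ε`, an upper bound for
the weighted pressure at that scale. -/
theorem PWeps_le_iSup_add [CompactSpace X] [Nonempty X] [BorelSpace X]
    (hf : ∀ n, Continuous (f n)) (hZ : IsClosed Z)
    (hε : 0 < ε) (hη : ∀ a b, dist a b < ε → ψ b ≤ ψ a + η) :
    PWeps f ψ Z ε ≤
      (⨆ (μ : Measure X) (_ : IsProbabilityMeasure μ) (_ : μ Z = 1), Pmeas f μ ψ) + (η : EReal) := by
  refine EReal.ge_of_forall_gt_iff_ge.1 fun α hα => ?_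
  obtain ⟨μ, hμ, hμZ, κ, hκ, N, hN⟩ := exists_measure_of_lt_PWeps hf hZ hα
  have hP : ((α - η : ℝ) : EReal) ≤ Pmeas f μ ψ := by
    refine le_Pmeas_of_forall fun x => ?_
    rw [Ploc_eq_sSup]
    refine le_trans ?_ (le_sSup ⟨ε, hε, rfl⟩)
    refine EReal.ge_of_forall_gt_iff_ge.1 fun r hr => le_liminf_of_le (by isBoundedDefault) ?_
    have hr' : 0 < α - η - r := sub_pos.2 (EReal.coe_lt_coe_iff.1 hr)
    filter_upwards [eventually_ge_atTop N, eventually_gt_atTop 0,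
      tendsto_natCast_atTop_atTop.eventually_ge_atTop (-Real.log κ / (α - η - r))]
      with n hn hn0 hnκ
    rw [div_le_iff₀ hr'] at hnκ
    refine (le_term_iff hn0 (measure_ne_top _ _) _ _).2 ((hN n hn x).trans ?_)
    refine ENNReal.ofReal_le_ofReal ?_
    rw [← Real.exp_log (inv_pos.2 hκ), ← Real.exp_add, Real.log_inv]
    refine Real.exp_le_exp.2 ?_
    have := birkSupBall_le (f := f) (n := n) (x := x) hε hη
    linarith
  calc (α : EReal) = ((α - η : ℝ) : EReal) + (η : EReal) := by
        rw [← EReal.coe_add, sub_add_cancel]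
    _ ≤ _ := by
        gcongr
        exact hP.trans (le_iSup₂_of_le μ hμ (le_iSup_of_le hμZ le_rfl))

/-- Mass distribution principle. The sets `A k N` of points with good bounds at scale `1 / (k + 1)`
from order `N` on need not be shown measurable: outer measure suffices throughout. -/
theorem le_PWeps_of_lt_Pmeas [BorelSpace X] (hf : ∀ n, Continuous (f n))
    [CompactSpace X] (hψ : Continuous ψ) {μ : Measure X}
    [IsProbabilityMeasure μ] (hZ : IsClosed Z) (hμZ : μ Z = 1) {s : ℝ}
    (hs : (s : EReal) < Pmeas f μ ψ) :
    ∃ ε₀ > 0, ∀ ε > 0, ε ≤ ε₀ → (s : EReal) ≤ PWeps f ψ Z ε := by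
  let A : ℕ → ℕ → Set X := fun k N => {x | ∀ n ≥ N, 0 < n →
    μ (bowenBall f n x (1 / ((k : ℝ) + 1))) ≤ ENNReal.ofReal (Real.exp (birkSum f ψ n x - s * n))}
  obtain ⟨k, N, hA⟩ : ∃ k N, μ (A k N) ≠ 0 := by
    by_contra! h
    refine absurd hs (not_lt.2 (Pmeas_le_of_ae ?_))
    refine measure_mono_null ?_ (measure_iUnion_null fun k => measure_iUnion_null (h k))
    intro x hx
    have hx : (s : EReal) < Ploc f μ ψ x := not_le.1 hx
    rw [Ploc_eq_sSup, lt_sSup_iff] at hx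
    obtain ⟨_, ⟨ε, hε, rfl⟩, hsε⟩ := hx
    obtain ⟨k, hk⟩ := exists_nat_one_div_lt (mem_Ioi.1 hε)
    obtain ⟨N, hN⟩ := eventually_atTop.1 (eventually_lt_of_lt_liminf hsε)
    refine mem_iUnion₂.2 ⟨k, N, fun n hn hn0 => ?_⟩
    exact (measure_mono (bowenBall_mono hk.le)).trans
      ((le_term_iff hn0 (measure_ne_top _ _) _ _).1 (hN n hn).le)
  refine ⟨1 / ((k : ℝ) + 1) / 2, by positivity, fun ε hε hεk => le_sInf ?_⟩
  rintro _ ⟨α, hα, rfl⟩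
  by_contra! hlt
  have hαs : α < s := EReal.coe_lt_coe_iff.1 hlt
  have hW : Wpre f ψ Z (N + 1) α ε = 0 :=
    le_antisymm ((le_iSup (fun n => Wpre f ψ Z n α ε) (N + 1)).trans_eq hα) zero_le
  refine hA (le_antisymm (le_trans (le_sInf ?_) hW.le) zero_le)
  rintro S ⟨u, x, m, c, hc, hm, hcov, rfl⟩
  classical
  -- Only the balls meeting `A k N` contribute to the cover of `A k N ∩ Z`.
  let F : u → X → ℝ≥0∞ := fun i => if (bowenBall f (m i) (x i) ε ∩ A k N).Nonempty then
    (bowenBall f (m i) (x i) ε).indicator fun _ => ENNReal.ofReal (c i) else 0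
  have hmeas : ∀ i, MeasurableSet (bowenBall f (m i) (x i) ε) := fun i =>
    (isOpen_bowenBall hf _ _ _).measurableSet
  have hF : ∀ i, Measurable (F i) := by
    intro i
    dsimp only [F]
    split_ifs
    · exact measurable_const.indicator (hmeas i)
    · exact measurable_const
  have hZ0 : μ Zᶜ = 0 := (prob_compl_eq_zero_iff hZ.measurableSet).2 hμZ
  calc μ (A k N) ≤ μ (A k N ∩ Z) + μ Zᶜ :=
        (measure_mono fun y hy => (em (y ∈ Z)).imp (fun h => ⟨hy, h⟩) id).trans
          (measure_union_le _ _)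
    _ = μ (A k N ∩ Z) := by rw [hZ0, add_zero]
    _ ≤ μ {z | 1 ≤ ∑' i, F i z} := by
        refine measure_mono fun z hz => (hcov z hz.2).trans (ENNReal.tsum_le_tsum fun i => ?_)
        by_cases hzi : z ∈ bowenBall f (m i) (x i) ε
        · have hne : (bowenBall f (m i) (x i) ε ∩ A k N).Nonempty := ⟨z, hzi, hz.1⟩
          dsimp only [F]
          rw [if_pos hne]
        · rw [indicator_of_notMem hzi]
          exact zero_le
    _ ≤ ∫⁻ z, ∑' i, F i z ∂μ := by
        simpa using mul_meas_ge_le_lintegral (μ := μ) (Measurable.tsum hF) 1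
    _ = ∑' i, ∫⁻ z, F i z ∂μ := lintegral_tsum fun i => (hF i).aemeasurable
    _ ≤ _ := ENNReal.tsum_le_tsum fun i => ?_
  dsimp only [F]
  split_ifs with hne
  · rw [lintegral_indicator_const (hmeas i)]
    refine mul_le_mul_right ?_ _
    obtain ⟨y, hy, hyA⟩ := hne
    have hmi : N + 1 ≤ m i := hm i i.2
    have hsub : bowenBall f (m i) (x i) ε ⊆ bowenBall f (m i) y (1 / ((k : ℝ) + 1)) :=
      fun z hz => bowenBall_mono (by linarith) (bowenBall_triangle (mem_bowenBall_comm.1 hy) hz)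
    refine (measure_mono hsub).trans ((hyA _ (by omega) (by omega)).trans ?_)
    refine ENNReal.ofReal_le_ofReal (Real.exp_le_exp.2 ?_)
    have h1 := birkSum_le_birkSupBall hψ hy
    have h2 : α * (m i : ℝ) ≤ s * m i := mul_le_mul_of_nonneg_right hαs.le (Nat.cast_nonneg _)
    linarith
  · simp

end Measures

/-! ### The variational principle -/

/-- Variational principle for topological pressure: for a nonempty compact
`Z ⊆ X`, `P^B(Z,ψ) = P^W(Z,ψ) = sup { P_μ(X,ψ) : μ Borel probability measure, μ(Z) = 1 }`. -/
theorem statement4 [CompactSpace X] [BorelSpace X]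
    (f : ℕ → X → X) (hf : ∀ n, Continuous (f n)) (ψ : X → ℝ) (hψ : Continuous ψ)
    (Z : Set X) (hZne : Z.Nonempty) (hZ : IsCompact Z) :
    PB f ψ Z = PW f ψ Z ∧
      PB f ψ Z = ⨆ (μ : Measure X) (_ : IsProbabilityMeasure μ) (_ : μ Z = 1), Pmeas f μ ψ := by
  have : Nonempty X := hZne.to_type
  set T : EReal := ⨆ (μ : Measure X) (_ : IsProbabilityMeasure μ) (_ : μ Z = 1), Pmeas f μ ψ with hT
  have hpos : ∀ᶠ ε : ℝ in nhdsWithin 0 (Ioi 0), 0 < ε := self_mem_nhdsWithin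
  have hsmall : ∀ ε₀ : ℝ, 0 < ε₀ → ∀ᶠ ε : ℝ in nhdsWithin 0 (Ioi 0), ε < ε₀ := fun ε₀ h =>
    nhdsWithin_le_nhds (eventually_lt_nhds h)
  have lower : ∀ a < T, ∀ᶠ ε : ℝ in nhdsWithin 0 (Ioi 0), a < PWeps f ψ Z ε := by
    intro a ha
    simp only [hT, lt_iSup_iff] at ha
    obtain ⟨μ, hμ, hμZ, ha⟩ := ha
    obtain ⟨s, has, hs⟩ := EReal.lt_iff_exists_real_btwn.1 ha
    obtain ⟨ε₀, hε₀, h⟩ := le_PWeps_of_lt_Pmeas hf hψ hZ.isClosed hμZ hs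
    filter_upwards [hpos, hsmall ε₀ hε₀] with ε hε hε'
    exact has.trans_le (h ε hε hε'.le)
  have upper : ∀ b > T, ∀ᶠ ε : ℝ in nhdsWithin 0 (Ioi 0), PBeps f ψ Z ε < b := by
    intro b hb
    obtain ⟨r, hr, hrb⟩ := EReal.lt_iff_exists_real_btwn.1 hb
    obtain ⟨q, hq, hqr⟩ := EReal.lt_iff_exists_real_btwn.1 hr
    have hqr : q < r := EReal.coe_lt_coe_iff.1 hqr
    set η := (r - q) / 3 with hη
    have hη0 : 0 < η := by linarith
    obtain ⟨ε₀, hε₀, hmod⟩ := exists_modulus hψ hη0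
    filter_upwards [hpos, hsmall ε₀ hε₀] with ε hε hε'
    have h1 : PBeps f ψ Z (2 * (ε / 2)) ≤ PWeps f ψ Z (ε / 2) + ((η + η : ℝ) : EReal) :=
      PBeps_le_PWeps hf hψ (half_pos hε) hη0 fun a b hab => hmod a b (by linarith)
    have h2 : PWeps f ψ Z (ε / 2) ≤ T + (η : EReal) :=
      PWeps_le_iSup_add hf hZ.isClosed (half_pos hε) fun a b hab => hmod a b (by linarith)
    rw [mul_div_cancel₀ ε two_ne_zero] at h1
    calc PBeps f ψ Z ε ≤ (T + (η : EReal)) + ((η + η : ℝ) : EReal) := h1.trans (by gcongr)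
      _ ≤ ((q : EReal) + (η : EReal)) + ((η + η : ℝ) : EReal) := by gcongr
      _ = (r : EReal) := by
          rw [← EReal.coe_add, ← EReal.coe_add]
          congr 1
          rw [hη]
          ring
      _ < b := hrb
  have hB : PB f ψ Z = T := by
    refine Tendsto.limUnder_eq (tendsto_order.2 ⟨fun a ha => ?_, upper⟩)
    exact (lower a ha).mono fun ε h => h.trans_le PWeps_le_PBeps
  have hW : PW f ψ Z = T := by
    refine Tendsto.limUnder_eq (tendsto_order.2 ⟨lower, fun b hb => ?_⟩)
    exact (upper b hb).mono fun ε h => PWeps_le_PBeps.trans_lt h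
  exact ⟨hB.trans hW.symm, hB⟩

end
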